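/- For any ordered logic program (Π,<), the operator A°_{(Π,<)} = C°_{(Π,<)}∘C_Π is monotonic: for all sets of literals X₁, X₂, if X₁ ⊆ X₂ then A°_{(Π,<)}(X₁) ⊆ A°_{(Π,<)}(X₂). -/

import Mathlib

open scoped Classical

/-- A literal: an atom `A` or its classical negation `¬A`. -/
inductive Lit (α : Type) : Type
  | pos : α → Lit α
  | neg : α → Lit α

/-- A rule with a head literal and finite positive and negative bodies. -/
structure Rule (α : Type) where
  head : Lit α
  pbody : Finset (Lit α)
  nbody : Finset (Lit α)

/-- A program is a set of rules (finiteness is stated as a hypothesis). -/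
abbrev Program (α : Type) := Set (Rule α)

/-- `X` is consistent if it contains no complementary pair. -/
def Consistent {α : Type} (X : Set (Lit α)) : Prop :=
  ¬ ∃ A : α, Lit.pos A ∈ X ∧ Lit.neg A ∈ X

/-- `X` is logically closed if it is consistent or equals the set of all literals. -/
def LogClosed {α : Type} (X : Set (Lit α)) : Prop :=
  Consistent X ∨ X = Set.univ

/-- `X` is closed under (basic) program `P`. -/
def ClosedUnder {α : Type} (P : Program α) (X : Set (Lit α)) : Prop :=
  ∀ r ∈ P, ↑r.pbody ⊆ X → r.head ∈ X

/-- `Cn P` : the smallest logically closed set closed under basic program `P`. -/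
def Cn {α : Type} (P : Program α) : Set (Lit α) :=
  ⋂₀ {X | LogClosed X ∧ ClosedUnder P X}

/-- The reduct of `P` relative to `X`. -/
def reduct {α : Type} (P : Program α) (X : Set (Lit α)) : Program α :=
  {s | ∃ r ∈ P, (↑r.nbody ∩ X = (∅ : Set (Lit α))) ∧ s = ⟨r.head, r.pbody, ∅⟩}

/-- A program is basic if all its rules have empty negative body. -/
def IsBasic {α : Type} (P : Program α) : Prop := ∀ r ∈ P, r.nbody = ∅

/-- `C_Π(X) = Cn(Π^X)`. -/
noncomputable def Cop {α : Type} (P : Program α) (X : Set (Lit α)) : Set (Lit α) :=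
  Cn (reduct P X)

/-- `A_Π(X) = C_Π(C_Π(X))`. -/
noncomputable def Aop {α : Type} (P : Program α) (X : Set (Lit α)) : Set (Lit α) :=
  Cop P (Cop P X)

/-- `X` is an answer set of `P` iff `Cn(P^X) = X`. -/
def AnswerSet {α : Type} (P : Program α) (X : Set (Lit α)) : Prop :=
  Cn (reduct P X) = X

/-- Immediate consequence operator for a basic program. -/
noncomputable def T {α : Type} (P : Program α) (X : Set (Lit α)) : Set (Lit α) :=
  if Consistent X then {L | ∃ r ∈ P, ↑r.pbody ⊆ X ∧ L = r.head} else Set.univ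

/-- `r` is active wrt `(X, Y)`. -/
def Active {α : Type} (r : Rule α) (X Y : Set (Lit α)) : Prop :=
  ↑r.pbody ⊆ X ∧ ↑r.nbody ∩ Y = (∅ : Set (Lit α))

/-- Extended immediate consequence operator `T_{Π,Y}(X)`. -/
noncomputable def TE {α : Type} (P : Program α) (Y X : Set (Lit α)) : Set (Lit α) :=
  if Consistent X then {L | ∃ r ∈ P, Active r X Y ∧ L = r.head} else Set.univ

/-- Preference-sensitive operator `T_{(Π,<),Y}(X)` (Definition 1). -/
noncomputable def TP {α : Type} (P : Program α) (lt : Rule α → Rule α → Prop)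
    (Y X : Set (Lit α)) : Set (Lit α) :=
  if Consistent X then
    {L | ∃ r ∈ P, Active r X Y ∧
      (¬ ∃ r' ∈ P, lt r r' ∧ Active r' Y X ∧ r'.head ∉ X) ∧ L = r.head}
  else Set.univ

/-- `C_{(Π,<)}(X)` (Definition 2). -/
noncomputable def CP {α : Type} (P : Program α) (lt : Rule α → Rule α → Prop)
    (X : Set (Lit α)) : Set (Lit α) :=
  ⋃ i : ℕ, (TP P lt X)^[i] ∅

/-- `A_{(Π,<)}(X) = C_{(Π,<)}(C_{(Π,<)}(X))`. -/
noncomputable def AP {α : Type} (P : Program α) (lt : Rule α → Rule α → Prop)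
    (X : Set (Lit α)) : Set (Lit α) :=
  CP P lt (CP P lt X)

/-- The set `D^r_{(X,Y)}` of removable literals. -/
def D {α : Type} (P : Program α) (lt : Rule α → Rule α → Prop) (r : Rule α)
    (X Y : Set (Lit α)) : Set (Lit α) :=
  {L | ∀ r' ∈ P, r'.head = L → ↑r'.pbody ⊆ Y →
      lt r' r ∧ ({r.head} ∪ X) ∩ ↑r'.nbody ≠ (∅ : Set (Lit α))}

/-- `T°_{(Π,<),Y}(X)` (Definition 3). -/
noncomputable def TN {α : Type} (P : Program α) (lt : Rule α → Rule α → Prop)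
    (Y X : Set (Lit α)) : Set (Lit α) :=
  if Consistent X then
    {L | ∃ r ∈ P, Active r X (Y \ D P lt r X Y) ∧ L = r.head}
  else Set.univ

/-- `C°_{(Π,<)}(X)` (Definition 4). -/
noncomputable def CN {α : Type} (P : Program α) (lt : Rule α → Rule α → Prop)
    (X : Set (Lit α)) : Set (Lit α) :=
  ⋃ i : ℕ, (TN P lt X)^[i] ∅

/-- `A°_{(Π,<)}(X) = C°_{(Π,<)}(C_Π(X))`. -/
noncomputable def AN {α : Type} (P : Program α) (lt : Rule α → Rule α → Prop)
    (X : Set (Lit α)) : Set (Lit α) :=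
  CN P lt (Cop P X)

/-!
Enlarging `X` and shrinking `Y` enlarges the set `D^r_{(X,Y)}` of removable literals, hence shrinks
`Y ∖ D^r_{(X,Y)}`, so no active rule becomes inactive: `T°_{(Π,<),Y}(X)` is monotone in `X` and
antitone in `Y`. Its iterates from `∅` inherit this, so `C°_{(Π,<)}` is antitone; so is `C_Π`,
because a larger set leaves fewer rules in the reduct.
-/

section Monotonicity

variable {α : Type}

theorem ClosedUnder.anti {P Q : Program α} {X : Set (Lit α)} (hX : ClosedUnder Q X)
    (hPQ : P ⊆ Q) : ClosedUnder P X :=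
  fun r hr => hX r (hPQ hr)

theorem Cn_monotone : Monotone (Cn : Program α → Set (Lit α)) :=
  fun _ _ hPQ => Set.sInter_subset_sInter fun _ hX => ⟨hX.1, hX.2.anti hPQ⟩

theorem reduct_antitone (P : Program α) : Antitone (reduct P) := by
  rintro X Y hXY _ ⟨r, hr, hdisj, rfl⟩
  exact ⟨r, hr, Set.subset_eq_empty (Set.inter_subset_inter_right _ hXY) hdisj, rfl⟩

theorem Cop_antitone (P : Program α) : Antitone (Cop P) :=
  Cn_monotone.comp_antitone (reduct_antitone P)

theorem Consistent.anti {X Y : Set (Lit α)} (hY : Consistent Y) (hXY : X ⊆ Y) : Consistent X :=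
  fun ⟨A, hpos, hneg⟩ => hY ⟨A, hXY hpos, hXY hneg⟩

variable {X X' Y Y' : Set (Lit α)}

theorem Active.mono {r : Rule α} (hr : Active r X Y) (hX : X ⊆ X') (hY : Y' ⊆ Y) :
    Active r X' Y' :=
  ⟨hr.1.trans hX, Set.subset_eq_empty (Set.inter_subset_inter_right _ hY) hr.2⟩

variable (P : Program α) (lt : Rule α → Rule α → Prop)

theorem D_subset_D (r : Rule α) (hX : X ⊆ X') (hY : Y' ⊆ Y) :
    D P lt r X Y ⊆ D P lt r X' Y' := by
  intro L hL r' hr' hhead hbody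
  obtain ⟨hlt, hblocked⟩ := hL r' hr' hhead (hbody.trans hY)
  have hsub : ({r.head} ∪ X) ∩ ↑r'.nbody ⊆ ({r.head} ∪ X') ∩ ↑r'.nbody :=
    Set.inter_subset_inter_left _ (Set.union_subset_union_right _ hX)
  exact ⟨hlt, fun hempty => hblocked (Set.subset_eq_empty hsub hempty)⟩

theorem TN_subset_TN (hX : X ⊆ X') (hY : Y' ⊆ Y) : TN P lt Y X ⊆ TN P lt Y' X' := by
  unfold TN
  by_cases hX' : Consistent X'
  · rw [if_pos (hX'.anti hX), if_pos hX']
    rintro _ ⟨r, hr, hactive, rfl⟩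
    have hdiff : Y' \ D P lt r X' Y' ⊆ Y \ D P lt r X Y :=
      Set.sdiff_subset_sdiff hY (D_subset_D P lt r hX hY)
    exact ⟨r, hr, hactive.mono hX hdiff, rfl⟩
  · rw [if_neg hX']
    exact Set.subset_univ _

theorem TN_monotone (Y : Set (Lit α)) : Monotone (TN P lt Y) :=
  fun _ _ hX => TN_subset_TN P lt hX subset_rfl

theorem TN_antitone_left : Antitone (TN P lt) :=
  fun _ _ hY _ => TN_subset_TN P lt subset_rfl hY

theorem CN_antitone : Antitone (CN P lt) := fun _ Y hXY =>
  Set.iUnion_mono fun n =>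
    (TN_monotone P lt Y).iterate_le_of_le (TN_antitone_left P lt hXY) n ∅

theorem AN_monotone_general : Monotone (AN P lt) :=
  (CN_antitone P lt).comp (Cop_antitone P)

end Monotonicity

/-- `A°_{(Π,<)} = C°_{(Π,<)} ∘ C_Π` is monotonic. -/
theorem AN_monotone {α : Type} (P : Program α) (hfin : P.Finite)
    (lt : Rule α → Rule α → Prop)
    (hirr : ∀ r, ¬ lt r r) (htrans : ∀ r₁ r₂ r₃, lt r₁ r₂ → lt r₂ r₃ → lt r₁ r₃)
    (X₁ X₂ : Set (Lit α)) (h : X₁ ⊆ X₂) :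
    AN P lt X₁ ⊆ AN P lt X₂ :=
  AN_monotone_general P lt h
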